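/- Let n ≥ 1, let λ : Fin n → ℝ, and suppose there exist indices r, s with λ_r < 0 and λ_s > 0. For smooth functions v : ℂⁿ → ℂ define ∂̄_j v = ∂v/∂z̄_j + λ_j z_j v. Then for every smooth compactly supported v : ℂⁿ → ℂ, ∑_{j=1}^n ∫_{ℂⁿ} |∂̄_j v|² e^{|z|²} dλ(z) ≥ ∫_{ℂⁿ} |v|² e^{|z|²} dλ(z). -/

import Mathlib

open MeasureTheory Complex Finset

noncomputable section

/-- Wirtinger derivative `∂v/∂z̄_j = (1/2)(∂/∂x_j + i ∂/∂y_j) v` on `ℂⁿ`. -/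
def wbar {n : ℕ} (j : Fin n) (v : (Fin n → ℂ) → ℂ) (z : Fin n → ℂ) : ℂ :=
  (1 / 2 : ℂ) * (fderiv ℝ v z (Pi.single j 1) + Complex.I * fderiv ℝ v z (Pi.single j Complex.I))

/-- Wirtinger derivative `∂v/∂z_j = (1/2)(∂/∂x_j − i ∂/∂y_j) v` on `ℂⁿ`. -/
def whol {n : ℕ} (j : Fin n) (v : (Fin n → ℂ) → ℂ) (z : Fin n → ℂ) : ℂ :=
  (1 / 2 : ℂ) * (fderiv ℝ v z (Pi.single j 1) - Complex.I * fderiv ℝ v z (Pi.single j Complex.I))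

/-- The operator `∂̄_j v = ∂v/∂z̄_j + λ_j z_j v`. -/
def dbarOp {n : ℕ} (lam : Fin n → ℝ) (j : Fin n) (v : (Fin n → ℂ) → ℂ) (z : Fin n → ℂ) : ℂ :=
  wbar j v z + (lam j : ℂ) * z j * v z

/-- The operator `δ_j v = −∂v/∂z_j + λ_j z̄_j v − z̄_j v`. -/
def deltaOp {n : ℕ} (lam : Fin n → ℝ) (j : Fin n) (v : (Fin n → ℂ) → ℂ) (z : Fin n → ℂ) : ℂ :=
  - whol j v z + (lam j : ℂ) * (starRingEnd ℂ) (z j) * v z - (starRingEnd ℂ) (z j) * v z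

/-- The weight `e^{|z|²}`. -/
def wgt {n : ℕ} (z : Fin n → ℂ) : ℝ := Real.exp (∑ j, Complex.normSq (z j))

/-! The operator `δ_j` is the formal adjoint of `D_j = ∂̄_j + λ_j z_j` in `L²(e^{|z|²})`, and
`D_j δ_j - δ_j D_j = 2 λ_j - 1`. Hence `‖D_j v‖² = ⟪δ_j D_j v, v⟫ = ‖δ_j v‖² + (1 - 2 λ_j) ‖v‖²`,
where `1 - 2 λ_j ≥ 1` as soon as `λ_j ≤ 0`. -/

open scoped ComplexConjugate

section IntegrationByParts

variable {E F : Type*} [NormedAddCommGroup E] [NormedSpace ℝ E]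
  [MeasurableSpace E] [BorelSpace E] [NormedAddCommGroup F] [NormedSpace ℝ F]
  {μ : Measure E} {f : E → F}

lemma integrable_fderiv_apply_of_hasCompactSupport [IsFiniteMeasureOnCompacts μ]
    (hf : ContDiff ℝ 1 f) (hfc : HasCompactSupport f) (e : E) :
    Integrable (fun x => fderiv ℝ f x e) μ :=
  ((hf.continuous_fderiv one_ne_zero).clm_apply
    continuous_const).integrable_of_hasCompactSupport (hfc.fderiv_apply (𝕜 := ℝ) e)

lemma integral_fderiv_apply_eq_zero [FiniteDimensional ℝ E] [μ.IsAddHaarMeasure]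
    (hf : ContDiff ℝ 1 f) (hfc : HasCompactSupport f) (e : E) : ∫ x, fderiv ℝ f x e ∂μ = 0 := by
  simpa using integral_smul_fderiv_eq_neg_fderiv_smul_of_integrable (𝕜 := ℝ) (μ := μ)
    (f := fun _ => 1) (g := f) (v := e) (by simp)
    (by simpa using integrable_fderiv_apply_of_hasCompactSupport hf hfc e)
    (by simpa using hf.continuous.integrable_of_hasCompactSupport hfc)
    (by fun_prop) (fun x _ => hf.differentiable one_ne_zero x)

end IntegrationByParts

variable {n : ℕ} {u v : (Fin n → ℂ) → ℂ} {z : Fin n → ℂ}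

lemma wbar_sub (hu : DifferentiableAt ℝ u z) (hv : DifferentiableAt ℝ v z) (j : Fin n) :
    wbar j (fun w => u w - v w) z = wbar j u z - wbar j v z := by
  simp only [wbar, fderiv_fun_sub hu hv, sub_apply]
  ring

lemma whol_add (hu : DifferentiableAt ℝ u z) (hv : DifferentiableAt ℝ v z) (j : Fin n) :
    whol j (fun w => u w + v w) z = whol j u z + whol j v z := by
  simp only [whol, fderiv_fun_add hu hv, add_apply]
  ring

lemma wbar_mul (hu : DifferentiableAt ℝ u z) (hv : DifferentiableAt ℝ v z) (j : Fin n) :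
    wbar j (fun w => u w * v w) z = wbar j u z * v z + u z * wbar j v z := by
  simp only [wbar, fderiv_fun_mul hu hv, add_apply, smul_apply, smul_eq_mul]
  ring

lemma whol_mul (hu : DifferentiableAt ℝ u z) (hv : DifferentiableAt ℝ v z) (j : Fin n) :
    whol j (fun w => u w * v w) z = whol j u z * v z + u z * whol j v z := by
  simp only [whol, fderiv_fun_mul hu hv, add_apply, smul_apply, smul_eq_mul]
  ring

lemma wbar_conj (j : Fin n) (v : (Fin n → ℂ) → ℂ) (z : Fin n → ℂ) :
    wbar j (fun w => conj (v w)) z = conj (whol j v z) := by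
  have hfderiv (e : Fin n → ℂ) : fderiv ℝ (fun w => conj (v w)) z e = conj (fderiv ℝ v z e) :=
    DFunLike.congr_fun (fderiv_star (𝕜 := ℝ) (f := v) (x := z)) e
  simp only [wbar, whol, hfderiv, map_mul, map_sub, map_div₀, map_one, map_ofNat, conj_I]
  ring

lemma whol_const_mul_apply (c : ℂ) (j : Fin n) (z : Fin n → ℂ) :
    whol j (fun w => c * w j) z = c := by
  have hfderiv : HasFDerivAt (fun w : Fin n → ℂ => c * w j)
      (c • ContinuousLinearMap.proj (R := ℝ) (φ := fun _ : Fin n => ℂ) j) z :=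
    (hasFDerivAt_apply j z).const_mul c
  simp only [whol, hfderiv.fderiv, smul_apply, ContinuousLinearMap.proj_apply,
    Pi.single_eq_same, smul_eq_mul]
  linear_combination (-(1 / 2) * c) * I_mul_I

lemma wbar_const_mul_conj_apply (c : ℂ) (j : Fin n) (z : Fin n → ℂ) :
    wbar j (fun w => c * conj (w j)) z = c := by
  have h := wbar_conj j (fun w => conj c * w j) z
  simpa only [map_mul, conj_conj, whol_const_mul_apply] using h

lemma wbar_whol_comm (hv : ContDiff ℝ 2 v) (j k : Fin n) (z : Fin n → ℂ) :
    wbar j (whol k v) z = whol k (wbar j v) z := by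
  have hv' : DifferentiableAt ℝ (fderiv ℝ v) z :=
    (hv.fderiv_right (m := 1) (by norm_num)).differentiable one_ne_zero z
  have hsymm : IsSymmSndFDerivAt ℝ v z := hv.contDiffAt.isSymmSndFDerivAt (by simp)
  have hdir (e : Fin n → ℂ) : HasFDerivAt (fun w => fderiv ℝ v w e)
      ((fderiv ℝ (fderiv ℝ v) z).flip e) z := by
    simpa using hv'.hasFDerivAt.clm_apply (hasFDerivAt_const e z)
  have hwhol := ((hdir (Pi.single k 1)).sub ((hdir (Pi.single k I)).const_mul I)).const_mul
    (1 / 2 : ℂ)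
  have hwbar := ((hdir (Pi.single j 1)).add ((hdir (Pi.single j I)).const_mul I)).const_mul
    (1 / 2 : ℂ)
  rw [wbar, whol, HasFDerivAt.fderiv (f := whol k v) hwhol,
    HasFDerivAt.fderiv (f := wbar j v) hwbar]
  simp only [smul_apply, add_apply, sub_apply, ContinuousLinearMap.flip_apply, smul_eq_mul,
    hsymm.eq (Pi.single j _)]
  ring

lemma integral_wbar_eq_zero (hv : ContDiff ℝ 1 v) (hvc : HasCompactSupport v) (j : Fin n) :
    ∫ z, wbar j v z = 0 := by
  have hint (e : Fin n → ℂ) : Integrable (fun z => fderiv ℝ v z e) :=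
    integrable_fderiv_apply_of_hasCompactSupport hv hvc e
  simp only [wbar]
  rw [integral_const_mul, integral_add (hint _) ((hint _).const_mul _), integral_const_mul,
    integral_fderiv_apply_eq_zero hv hvc, integral_fderiv_apply_eq_zero hv hvc]
  simp

section Regularity

variable {m : WithTop ℕ∞}

lemma contDiff_wbar (hv : ContDiff ℝ (m + 1) v) (j : Fin n) : ContDiff ℝ m (wbar j v) := by
  have : ContDiff ℝ m (fderiv ℝ v) := hv.fderiv_right le_rfl
  unfold wbar
  fun_prop

lemma contDiff_whol (hv : ContDiff ℝ (m + 1) v) (j : Fin n) : ContDiff ℝ m (whol j v) := by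
  have : ContDiff ℝ m (fderiv ℝ v) := hv.fderiv_right le_rfl
  unfold whol
  fun_prop

lemma contDiff_conj {E : Type*} [NormedAddCommGroup E] [NormedSpace ℝ E] {f : E → ℂ}
    (hf : ContDiff ℝ m f) : ContDiff ℝ m (fun x => conj (f x)) :=
  conjCLE.contDiff.comp hf

lemma contDiff_dbarOp (hv : ContDiff ℝ (m + 1) v) (lam : Fin n → ℝ) (j : Fin n) :
    ContDiff ℝ m (dbarOp lam j v) := by
  have hv' : ContDiff ℝ m v := hv.of_le le_self_add
  have hwbar := contDiff_wbar hv j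
  unfold dbarOp
  fun_prop

lemma contDiff_deltaOp (hv : ContDiff ℝ (m + 1) v) (lam : Fin n → ℝ) (j : Fin n) :
    ContDiff ℝ m (deltaOp lam j v) := by
  have hv' : ContDiff ℝ m v := hv.of_le le_self_add
  have hwhol := contDiff_whol hv j
  have hconj := contDiff_conj (contDiff_apply (n := m) ℝ ℂ j)
  unfold deltaOp
  fun_prop

lemma hasCompactSupport_dbarOp (hvc : HasCompactSupport v) (lam : Fin n → ℝ) (j : Fin n) :
    HasCompactSupport (dbarOp lam j v) := by
  refine HasCompactSupport.intro hvc.isCompact fun z hz => ?_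
  simp [dbarOp, wbar, image_eq_zero_of_notMem_tsupport hz, fderiv_of_notMem_tsupport ℝ hz]

lemma hasCompactSupport_deltaOp (hvc : HasCompactSupport v) (lam : Fin n → ℝ) (j : Fin n) :
    HasCompactSupport (deltaOp lam j v) := by
  refine HasCompactSupport.intro hvc.isCompact fun z hz => ?_
  simp [deltaOp, whol, image_eq_zero_of_notMem_tsupport hz, fderiv_of_notMem_tsupport ℝ hz]

end Regularity

lemma contDiff_wgt {m : WithTop ℕ∞} : ContDiff ℝ m (wgt (n := n)) := by
  unfold wgt
  simp only [normSq_eq_norm_sq]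
  exact (ContDiff.sum fun j _ => (contDiff_apply ℝ ℂ j).norm_sq ℝ).exp

lemma wgt_pos (z : Fin n → ℂ) : 0 < wgt z := Real.exp_pos _

lemma fderiv_wgt_apply (z e : Fin n → ℂ) :
    fderiv ℝ wgt z e = wgt z * ∑ k, 2 * inner ℝ (z k) (e k) := by
  have h : HasFDerivAt (fun w : Fin n → ℂ => Real.exp (∑ k, ‖w k‖ ^ 2)) _ z :=
    (HasFDerivAt.fun_sum (u := univ) fun k _ => (hasFDerivAt_apply (𝕜 := ℝ) k z).norm_sq).exp
  have hwgt : wgt (n := n) = fun w => Real.exp (∑ k, ‖w k‖ ^ 2) := by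
    simp only [wgt, normSq_eq_norm_sq, funext_iff, implies_true]
  rw [hwgt, h.fderiv]
  simp [mul_sum, mul_add]

lemma wbar_wgt (j : Fin n) (z : Fin n → ℂ) :
    wbar j (fun w => (wgt w : ℂ)) z = z j * wgt z := by
  have hwgt : DifferentiableAt ℝ wgt z := contDiff_wgt.differentiable one_ne_zero z
  have hfderiv (c : ℂ) : fderiv ℝ (fun w => (wgt w : ℂ)) z (Pi.single j c) =
      (wgt z * (2 * inner ℝ (z j) c) : ℝ) := by
    have hcomp : fderiv ℝ (fun w => (wgt w : ℂ)) z = ofRealCLM.comp (fderiv ℝ wgt z) :=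
      (ofRealCLM.hasFDerivAt.comp z hwgt.hasFDerivAt).fderiv
    rw [hcomp, ContinuousLinearMap.comp_apply, fderiv_wgt_apply,
      sum_eq_single_of_mem j (mem_univ j) (fun k _ hk => by simp [hk]), Pi.single_eq_same,
      ofRealCLM_apply]
  rw [wbar, hfderiv, hfderiv]
  simp only [Complex.inner, mul_re, conj_re, conj_im, one_re, one_im, I_re, I_im]
  push_cast
  linear_combination (wgt z : ℂ) * re_add_im (z j)

/-- The inner product `⟪u, v⟫ = ∫ u v̄ e^{|z|²}` of the weighted space `L²(ℂⁿ, e^{|z|²})`, linear in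
the first argument. -/
def weightedInner (u v : (Fin n → ℂ) → ℂ) : ℂ :=
  ∫ z, u z * conj (v z) * wgt z

lemma conj_weightedInner (u v : (Fin n → ℂ) → ℂ) :
    conj (weightedInner u v) = weightedInner v u := by
  simp only [weightedInner, ← integral_conj, map_mul, conj_conj, conj_ofReal]
  simp only [mul_comm]

lemma weightedInner_self (v : (Fin n → ℂ) → ℂ) :
    weightedInner v v = ((∫ z, ‖v z‖ ^ 2 * wgt z : ℝ) : ℂ) := by
  rw [weightedInner, ← integral_complex_ofReal]
  simp only [mul_conj, normSq_eq_norm_sq, ofReal_mul]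

lemma integral_norm_sq_mul_wgt_nonneg (v : (Fin n → ℂ) → ℂ) : 0 ≤ ∫ z, ‖v z‖ ^ 2 * wgt z :=
  integral_nonneg fun z => mul_nonneg (sq_nonneg _) (wgt_pos z).le

lemma integrable_mul_conj_mul_wgt (hu : Continuous u) (huc : HasCompactSupport u)
    (hv : Continuous v) : Integrable fun z => u z * conj (v z) * (wgt z : ℂ) := by
  have hwgt : Continuous (wgt (n := n)) := (contDiff_wgt (m := 0)).continuous
  exact Continuous.integrable_of_hasCompactSupport (by fun_prop) huc.mul_right.mul_right

lemma weightedInner_add_const_mul_right {w : (Fin n → ℂ) → ℂ} (hu : Continuous u)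
    (huc : HasCompactSupport u) (hv : Continuous v) (hw : Continuous w) (c : ℝ) :
    weightedInner u (fun z => v z + c * w z) = weightedInner u v + c * weightedInner u w := by
  simp only [weightedInner]
  rw [← integral_const_mul, ← integral_add (integrable_mul_conj_mul_wgt hu huc hv)
    ((integrable_mul_conj_mul_wgt hu huc hw).const_mul _)]
  congr 1 with z
  simp only [map_add, map_mul, conj_ofReal]
  ring

lemma weightedInner_dbarOp_left (hu : ContDiff ℝ 1 u) (huc : HasCompactSupport u)
    (hv : ContDiff ℝ 1 v) (lam : Fin n → ℝ) (j : Fin n) :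
    weightedInner (dbarOp lam j u) v = weightedInner u (deltaOp lam j v) := by
  have hvconj := contDiff_conj hv
  have hwgt : ContDiff ℝ 1 fun z : Fin n → ℂ => (wgt z : ℂ) := ofRealCLM.contDiff.comp contDiff_wgt
  have hwbar (z : Fin n → ℂ) : wbar j (fun w => u w * conj (v w) * wgt w) z =
      dbarOp lam j u z * conj (v z) * wgt z - u z * conj (deltaOp lam j v z) * wgt z := by
    have hud := hu.differentiable one_ne_zero z
    have hvd := hvconj.differentiable one_ne_zero z
    rw [wbar_mul (hud.fun_mul hvd) (hwgt.differentiable one_ne_zero z), wbar_mul hud hvd, wbar_conj,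
      wbar_wgt, dbarOp, deltaOp]
    simp only [map_add, map_sub, map_neg, map_mul, conj_conj, conj_ofReal]
    ring
  have hint : ∫ z, wbar j (fun w => u w * conj (v w) * wgt w) z = 0 :=
    integral_wbar_eq_zero ((hu.mul hvconj).mul hwgt) huc.mul_right.mul_right j
  have hdbar : Integrable fun z => dbarOp lam j u z * conj (v z) * (wgt z : ℂ) :=
    integrable_mul_conj_mul_wgt (contDiff_dbarOp (m := 0) hu lam j).continuous
      (hasCompactSupport_dbarOp huc lam j) hv.continuous
  have hdelta : Integrable fun z => u z * conj (deltaOp lam j v z) * (wgt z : ℂ) :=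
    integrable_mul_conj_mul_wgt hu.continuous huc (contDiff_deltaOp (m := 0) hv lam j).continuous
  simp only [hwbar] at hint
  rwa [integral_sub hdbar hdelta, sub_eq_zero] at hint

lemma whol_dbarOp (hv : ContDiff ℝ 2 v) (lam : Fin n → ℝ) (j : Fin n) (z : Fin n → ℂ) :
    whol j (dbarOp lam j v) z =
      whol j (wbar j v) z + (lam j * v z + lam j * z j * whol j v z) := by
  have hvd : DifferentiableAt ℝ v z := hv.differentiable two_ne_zero z
  have hwbar : DifferentiableAt ℝ (wbar j v) z :=
    (contDiff_wbar (m := 1) hv j).differentiable one_ne_zero z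
  have hcoord : DifferentiableAt ℝ (fun w : Fin n → ℂ => (lam j : ℂ) * w j) z := by fun_prop
  unfold dbarOp
  rw [whol_add hwbar (hcoord.fun_mul hvd), whol_mul hcoord hvd, whol_const_mul_apply]

lemma wbar_deltaOp (hv : ContDiff ℝ 2 v) (lam : Fin n → ℝ) (j : Fin n) (z : Fin n → ℂ) :
    wbar j (deltaOp lam j v) z =
      (lam j - 1) * v z + (lam j - 1) * conj (z j) * wbar j v z - wbar j (whol j v) z := by
  have hvd : DifferentiableAt ℝ v z := hv.differentiable two_ne_zero z
  have hwhol : DifferentiableAt ℝ (whol j v) z :=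
    (contDiff_whol (m := 1) hv j).differentiable one_ne_zero z
  have hconj : DifferentiableAt ℝ (fun w : Fin n → ℂ => ((lam j : ℂ) - 1) * conj (w j)) z :=
    (contDiff_const.mul (contDiff_conj (contDiff_apply ℝ ℂ j))).differentiable one_ne_zero z
  have hdelta : deltaOp lam j v = fun w => ((lam j : ℂ) - 1) * conj (w j) * v w - whol j v w := by
    funext w
    rw [deltaOp]
    ring
  rw [hdelta, wbar_sub (hconj.fun_mul hvd) hwhol, wbar_mul hconj hvd, wbar_const_mul_conj_apply]

lemma deltaOp_dbarOp (hv : ContDiff ℝ 2 v) (lam : Fin n → ℝ) (j : Fin n) (z : Fin n → ℂ) :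
    deltaOp lam j (dbarOp lam j v) z =
      dbarOp lam j (deltaOp lam j v) z + (1 - 2 * lam j : ℝ) * v z := by
  rw [deltaOp, whol_dbarOp hv, dbarOp.eq_def lam j (deltaOp lam j v), wbar_deltaOp hv,
    wbar_whol_comm hv, dbarOp, deltaOp]
  push_cast
  ring

theorem integral_norm_sq_dbarOp_eq (hv : ContDiff ℝ 2 v) (hvc : HasCompactSupport v)
    (lam : Fin n → ℝ) (j : Fin n) :
    ∫ z, ‖dbarOp lam j v z‖ ^ 2 * wgt z =
      (∫ z, ‖deltaOp lam j v z‖ ^ 2 * wgt z) + (1 - 2 * lam j) * ∫ z, ‖v z‖ ^ 2 * wgt z := by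
  have hv₁ : ContDiff ℝ 1 v := hv.of_le one_le_two
  have hdbar : ContDiff ℝ 1 (dbarOp lam j v) := contDiff_dbarOp hv lam j
  have hdelta : ContDiff ℝ 1 (deltaOp lam j v) := contDiff_deltaOp hv lam j
  have hdbar_delta : Continuous (dbarOp lam j (deltaOp lam j v)) :=
    (contDiff_dbarOp (m := 0) hdelta lam j).continuous
  have hinner : weightedInner (dbarOp lam j v) (dbarOp lam j v) =
      weightedInner (deltaOp lam j v) (deltaOp lam j v)
        + (1 - 2 * lam j : ℝ) * weightedInner v v := by
    calc weightedInner (dbarOp lam j v) (dbarOp lam j v)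
        = weightedInner v (deltaOp lam j (dbarOp lam j v)) :=
          weightedInner_dbarOp_left hv₁ hvc hdbar lam j
      _ = weightedInner v (dbarOp lam j (deltaOp lam j v))
            + (1 - 2 * lam j : ℝ) * weightedInner v v := by
          rw [funext (deltaOp_dbarOp hv lam j), weightedInner_add_const_mul_right hv.continuous hvc
            hdbar_delta hv.continuous]
      _ = weightedInner (deltaOp lam j v) (deltaOp lam j v)
            + (1 - 2 * lam j : ℝ) * weightedInner v v := by
          rw [← conj_weightedInner, weightedInner_dbarOp_left hdelta
            (hasCompactSupport_deltaOp hvc lam j) hv₁, conj_weightedInner]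
  simp only [weightedInner_self] at hinner
  exact_mod_cast hinner

theorem function_estimate_general_general (lam : Fin n → ℝ) {r : Fin n} (hlr : lam r ≤ 0)
    (hv : ContDiff ℝ 2 v) (hvc : HasCompactSupport v) :
    ∫ z, ‖v z‖ ^ 2 * wgt z ≤ ∑ j, ∫ z, ‖dbarOp lam j v z‖ ^ 2 * wgt z := by
  calc ∫ z, ‖v z‖ ^ 2 * wgt z
      ≤ (∫ z, ‖deltaOp lam r v z‖ ^ 2 * wgt z) + (1 - 2 * lam r) * ∫ z, ‖v z‖ ^ 2 * wgt z := by
        have hδ := integral_norm_sq_mul_wgt_nonneg (deltaOp lam r v)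
        have hv₀ := integral_norm_sq_mul_wgt_nonneg v
        nlinarith
    _ = ∫ z, ‖dbarOp lam r v z‖ ^ 2 * wgt z := (integral_norm_sq_dbarOp_eq hv hvc lam r).symm
    _ ≤ ∑ j, ∫ z, ‖dbarOp lam j v z‖ ^ 2 * wgt z :=
        single_le_sum (f := fun j => ∫ z, ‖dbarOp lam j v z‖ ^ 2 * wgt z)
          (fun j _ => integral_norm_sq_mul_wgt_nonneg _) (mem_univ r)

theorem function_estimate_general (n : ℕ) (hn : 1 ≤ n) (lam : Fin n → ℝ)
    (r s : Fin n) (hlr : lam r < 0) (hls : 0 < lam s)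
    (v : (Fin n → ℂ) → ℂ) (hv : ContDiff ℝ (⊤ : ℕ∞) v) (hvcs : HasCompactSupport v) :
    ∫ z : Fin n → ℂ, ‖v z‖ ^ 2 * wgt z
      ≤ ∑ j, ∫ z : Fin n → ℂ, ‖dbarOp lam j v z‖ ^ 2 * wgt z :=
  function_estimate_general_general lam hlr.le (contDiff_infty.mp hv 2) hvcs
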